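/- arXiv:math/9805104 — 6 statements merged into one kernel-verified Lean document; each statement's English description precedes it below -/
import Mathlib

section
/- A weak bialgebra A is left-monoidal (i.e. ε(abc) = ε(a b₍₁₎) ε(b₍₂₎ c) for all a, b, c) if and only if for all a, b in A: a ε_RR(b) = ε(a₍₂₎ b) a₍₁₎. -/
/-!
Let a functional `φ` act on `A` by `φ ⇀ a = a₍₁₎ φ(a₍₂₎)`. For `φ = ε(· c)`, left monoidality reads
`φ(ab) = ε(a (φ ⇀ b))`, and the other condition reads `a (φ ⇀ 1) = φ ⇀ a`. These are equivalent
for every single `φ`. Coassociativity gives `Δ(φ ⇀ 1) = 1₍₁₎ ⊗ (φ ⇀ 1₍₂₎)`, so the first implies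
`a (φ ⇀ 1) = (id ⊗ ε)(Δ(a) Δ(φ ⇀ 1)) = a₍₁₎ 1₍₁₎ ε(a₍₂₎ (φ ⇀ 1₍₂₎)) = a₍₁₎ 1₍₁₎ φ(a₍₂₎ 1₍₂₎)`,
which is `φ ⇀ a`. Conversely, the second implies
`ε(a (φ ⇀ b)) = ε(ab (φ ⇀ 1)) = ε(φ ⇀ ab) = φ(ab)`.
-/

open TensorProduct

noncomputable section

variable (K A : Type*) [Field K] [Ring A] [Algebra K A] [Coalgebra K A]

/-- The linear map `a ↦ a ⊗ 1`. -/
def inclL : A →ₗ[K] A ⊗[K] A := (TensorProduct.mk K A A).flip 1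

/-- The linear map `a ↦ 1 ⊗ a`. -/
def inclR : A →ₗ[K] A ⊗[K] A := TensorProduct.mk K A A 1

/-- `ε_LL(a) = ε(a 1₍₁₎) 1₍₂₎`. -/
def eLL : A →ₗ[K] A :=
  (TensorProduct.lid K A).toLinearMap ∘ₗ
    LinearMap.rTensor A (Coalgebra.counit (R := K) (A := A)) ∘ₗ
    LinearMap.mulRight K (Coalgebra.comul (R := K) (1 : A)) ∘ₗ inclL K A

/-- `ε_RR(a) = 1₍₁₎ ε(1₍₂₎ a)`. -/
def eRR : A →ₗ[K] A :=
  (TensorProduct.rid K A).toLinearMap ∘ₗ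
    LinearMap.lTensor A (Coalgebra.counit (R := K) (A := A)) ∘ₗ
    LinearMap.mulLeft K (Coalgebra.comul (R := K) (1 : A)) ∘ₗ inclR K A

/-- `ε_LR(a) = ε(1₍₁₎ a) 1₍₂₎`. -/
def eLR : A →ₗ[K] A :=
  (TensorProduct.lid K A).toLinearMap ∘ₗ
    LinearMap.rTensor A (Coalgebra.counit (R := K) (A := A)) ∘ₗ
    LinearMap.mulLeft K (Coalgebra.comul (R := K) (1 : A)) ∘ₗ inclL K A

/-- `ε_RL(a) = 1₍₁₎ ε(a 1₍₂₎)`. -/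
def eRL : A →ₗ[K] A :=
  (TensorProduct.rid K A).toLinearMap ∘ₗ
    LinearMap.lTensor A (Coalgebra.counit (R := K) (A := A)) ∘ₗ
    LinearMap.mulRight K (Coalgebra.comul (R := K) (1 : A)) ∘ₗ inclR K A

/-- Convolution product: `(conv f g)(a) = f(a₍₁₎) g(a₍₂₎)` (implicit Sweedler sums). -/
def conv (f g : A →ₗ[K] A) : A →ₗ[K] A :=
  LinearMap.mul' K A ∘ₗ TensorProduct.map f g ∘ₗ Coalgebra.comul (R := K)

/-- Opposite convolution: `(copConv f g)(a) = f(a₍₂₎) g(a₍₁₎)`. -/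
def copConv (f g : A →ₗ[K] A) : A →ₗ[K] A :=
  LinearMap.mul' K A ∘ₗ TensorProduct.map f g ∘ₗ
    (TensorProduct.comm K A A).toLinearMap ∘ₗ Coalgebra.comul (R := K)

/-- `ε ⊗ ε` as a functional on `A ⊗ A`. -/
def pairCC : A ⊗[K] A →ₗ[K] K :=
  (TensorProduct.lid K K).toLinearMap ∘ₗ
    TensorProduct.map (Coalgebra.counit (R := K) (A := A)) (Coalgebra.counit (R := K) (A := A))

/-- `a ↦ ε(a)·1`. -/
def epsUnit : A →ₗ[K] A := Algebra.linearMap K A ∘ₗ Coalgebra.counit (R := K)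

/-- `b ↦ (x ↦ ε(b x))`, i.e. the map `ε_L : A → Â`. -/
def epsLfun : A →ₗ[K] A →ₗ[K] K :=
  LinearMap.llcomp K A A K (Coalgebra.counit (R := K) (A := A)) ∘ₗ LinearMap.mul K A

/-- The weak-bialgebra axiom: the coproduct is multiplicative. -/
def WeakBialg : Prop :=
  ∀ a b : A, Coalgebra.comul (R := K) (a * b) =
    Coalgebra.comul (R := K) a * Coalgebra.comul (R := K) b

/-- `ε(abc) = ε(a b₍₁₎) ε(b₍₂₎ c)` for all `a b c`. -/
def LeftMonoidal : Prop :=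
  ∀ a b c : A, Coalgebra.counit (R := K) (a * b * c) =
    pairCC K A ((a ⊗ₜ[K] (1 : A)) * Coalgebra.comul (R := K) b * ((1 : A) ⊗ₜ[K] c))

/-- `ε(abc) = ε(a b₍₂₎) ε(b₍₁₎ c)` for all `a b c`. -/
def RightMonoidal : Prop :=
  ∀ a b c : A, Coalgebra.counit (R := K) (a * b * c) =
    pairCC K A ((a ⊗ₜ[K] (1 : A)) *
      (TensorProduct.comm K A A (Coalgebra.comul (R := K) b)) * ((1 : A) ⊗ₜ[K] c))

/-- `(Δ(1) ⊗ 1)(1 ⊗ Δ(1)) = (Δ ⊗ id)(Δ(1))`. -/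
def LeftComonoidal : Prop :=
  ((Coalgebra.comul (R := K) (1 : A)) ⊗ₜ[K] (1 : A)) *
      ((TensorProduct.assoc K A A A).symm ((1 : A) ⊗ₜ[K] Coalgebra.comul (R := K) (1 : A))) =
    LinearMap.rTensor A (Coalgebra.comul (R := K)) (Coalgebra.comul (R := K) (1 : A))

/-- `(1 ⊗ Δ(1))(Δ(1) ⊗ 1) = (Δ ⊗ id)(Δ(1))`. -/
def RightComonoidal : Prop :=
  ((TensorProduct.assoc K A A A).symm ((1 : A) ⊗ₜ[K] Coalgebra.comul (R := K) (1 : A))) *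
      ((Coalgebra.comul (R := K) (1 : A)) ⊗ₜ[K] (1 : A)) =
    LinearMap.rTensor A (Coalgebra.comul (R := K)) (Coalgebra.comul (R := K) (1 : A))

/-- `N_LL(A) = {a | Δ(a) = a 1₍₁₎ ⊗ 1₍₂₎}`. -/
def NLL : Set A :=
  {a : A | Coalgebra.comul (R := K) a =
    (a ⊗ₜ[K] (1 : A)) * Coalgebra.comul (R := K) (1 : A)}

/-- `N_LR(A) = {a | Δ(a) = 1₍₁₎ a ⊗ 1₍₂₎}`. -/
def NLR : Set A :=
  {a : A | Coalgebra.comul (R := K) a =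
    Coalgebra.comul (R := K) (1 : A) * (a ⊗ₜ[K] (1 : A))}

/-- `N_RL(A) = {a | Δ(a) = 1₍₁₎ ⊗ a 1₍₂₎}`. -/
def NRL : Set A :=
  {a : A | Coalgebra.comul (R := K) a =
    ((1 : A) ⊗ₜ[K] a) * Coalgebra.comul (R := K) (1 : A)}

/-- `N_RR(A) = {a | Δ(a) = 1₍₁₎ ⊗ 1₍₂₎ a}`. -/
def NRR : Set A :=
  {a : A | Coalgebra.comul (R := K) a =
    Coalgebra.comul (R := K) (1 : A) * ((1 : A) ⊗ₜ[K] a)}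

/-- A subset which is a unital subalgebra. -/
def IsUnitalSub (S : Set A) : Prop :=
  (1 : A) ∈ S ∧ (∀ x ∈ S, ∀ y ∈ S, x * y ∈ S) ∧ (∀ x ∈ S, ∀ y ∈ S, x + y ∈ S) ∧
    ∀ (k : K), ∀ x ∈ S, k • x ∈ S

/-- `A_L = {φ(1₍₁₎) 1₍₂₎ : φ ∈ Â}`. -/
def ALset : Set A :=
  {x : A | ∃ φ : A →ₗ[K] K,
    x = (TensorProduct.lid K A) (LinearMap.rTensor A φ (Coalgebra.comul (R := K) (1 : A)))}

/-- `A_R = {φ(1₍₂₎) 1₍₁₎ : φ ∈ Â}`. -/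
def ARset : Set A :=
  {x : A | ∃ φ : A →ₗ[K] K,
    x = (TensorProduct.rid K A) (LinearMap.lTensor A φ (Coalgebra.comul (R := K) (1 : A)))}

section Slice

variable {R M N P : Type*} [CommSemiring R]
  [AddCommMonoid M] [Module R M] [AddCommMonoid N] [Module R N] [AddCommMonoid P] [Module R P]

/-- The slice map `id ⊗ φ : M ⊗ N → M`, which sends `x ⊗ y` to `φ(y) x`. -/
def rightSlice (φ : N →ₗ[R] R) : M ⊗[R] N →ₗ[R] M :=
  (TensorProduct.rid R M).toLinearMap ∘ₗ LinearMap.lTensor M φ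

@[simp]
lemma rightSlice_tmul (φ : N →ₗ[R] R) (x : M) (y : N) :
    rightSlice φ (x ⊗ₜ[R] y) = φ y • x := by
  simp [rightSlice]

lemma map_rightSlice (f : M →ₗ[R] P) (φ : N →ₗ[R] R) (t : M ⊗[R] N) :
    f (rightSlice φ t) = rightSlice φ (LinearMap.rTensor N f t) := by
  induction t with
  | zero => simp
  | add s t hs ht => simp only [map_add, hs, ht]
  | tmul x y => simp

lemma rightSlice_assoc_symm (φ : P →ₗ[R] R) (t : M ⊗[R] (N ⊗[R] P)) :
    rightSlice φ ((TensorProduct.assoc R M N P).symm t) =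
      LinearMap.lTensor M (rightSlice φ) t := by
  have h : rightSlice φ ∘ₗ (TensorProduct.assoc R M N P).symm.toLinearMap =
      LinearMap.lTensor M (rightSlice φ) := by
    ext x y z
    simp
  exact LinearMap.congr_fun h t

end Slice

/-- The left hit action of the dual on a coalgebra, `φ ⇀ a = a₍₁₎ φ(a₍₂₎)`. -/
def leftHit {R C : Type*} [CommSemiring R] [AddCommMonoid C] [Module R C] [Coalgebra R C]
    (φ : C →ₗ[R] R) : C →ₗ[R] C :=
  rightSlice φ ∘ₗ Coalgebra.comul

local infixr:75 "⇀" => leftHit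

section Coalgebra

variable {R C : Type*} [CommSemiring R] [AddCommMonoid C] [Module R C] [Coalgebra R C]

lemma leftHit_apply (φ : C →ₗ[R] R) (a : C) : φ ⇀ a = rightSlice φ (Coalgebra.comul a) :=
  rfl

lemma counit_leftHit (φ : C →ₗ[R] R) (a : C) : Coalgebra.counit (φ ⇀ a) = φ a := by
  rw [leftHit_apply, map_rightSlice, Coalgebra.rTensor_counit_comul, rightSlice_tmul,
    smul_eq_mul, mul_one]

lemma rightSlice_counit_comul (a : C) :
    rightSlice Coalgebra.counit (Coalgebra.comul (R := R) a) = a := by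
  simp [rightSlice]

lemma comul_leftHit (φ : C →ₗ[R] R) (a : C) :
    Coalgebra.comul (φ ⇀ a) = LinearMap.lTensor C (leftHit φ) (Coalgebra.comul a) := by
  rw [leftHit_apply, map_rightSlice, ← Coalgebra.coassoc_symm_apply, rightSlice_assoc_symm,
    ← LinearMap.lTensor_comp_apply, leftHit]

end Coalgebra

section WeakBialgebra

variable {R B : Type*} [CommSemiring R] [Semiring B] [Algebra R B]

lemma rightSlice_mul_lTensor {φ ψ : B →ₗ[R] R} {f : B →ₗ[R] B}
    (h : ∀ x y, ψ (x * f y) = φ (x * y)) (s t : B ⊗[R] B) :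
    rightSlice ψ (s * LinearMap.lTensor B f t) = rightSlice φ (s * t) := by
  induction s with
  | zero => simp
  | add s s' hs hs' => simp only [add_mul, map_add, hs, hs']
  | tmul x y =>
    induction t with
    | zero => simp
    | add t t' ht ht' => simp only [mul_add, map_add, ht, ht']
    | tmul z w => simp [h]

variable [Coalgebra R B]

theorem forall_mul_eq_counit_mul_leftHit_iff
    (hΔ : ∀ a b : B, Coalgebra.comul (R := R) (a * b) = Coalgebra.comul a * Coalgebra.comul b)
    (φ : B →ₗ[R] R) :
    (∀ a b, φ (a * b) = Coalgebra.counit (a * (φ ⇀ b))) ↔ ∀ a, a * (φ ⇀ 1) = φ ⇀ a := by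
  constructor
  · intro h a
    calc a * (φ ⇀ 1)
        = rightSlice Coalgebra.counit (Coalgebra.comul (R := R) (a * (φ ⇀ 1))) :=
          (rightSlice_counit_comul _).symm
      _ = rightSlice Coalgebra.counit
            (Coalgebra.comul a * LinearMap.lTensor B (leftHit φ) (Coalgebra.comul 1)) := by
          rw [hΔ, comul_leftHit]
      _ = rightSlice φ (Coalgebra.comul a * Coalgebra.comul 1) :=
          rightSlice_mul_lTensor (fun x y => (h x y).symm) _ _
      _ = φ ⇀ a := by rw [← hΔ, mul_one, leftHit_apply]
  · intro h a b
    calc φ (a * b)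
        = Coalgebra.counit (φ ⇀ (a * b)) := (counit_leftHit φ _).symm
      _ = Coalgebra.counit (a * (φ ⇀ b)) := by rw [← h (a * b), mul_assoc, h b]

variable (R) in
/-- The functional `ε(· b)`, whose hit action is `x ↦ x₍₁₎ ε(x₍₂₎ b)`. -/
def counitMulRight (b : B) : B →ₗ[R] R :=
  Coalgebra.counit ∘ₗ LinearMap.mulRight R b

lemma counitMulRight_apply (b x : B) : counitMulRight R b x = Coalgebra.counit (x * b) :=
  rfl

end WeakBialgebra

section LeftMonoidal

variable {K A}

lemma eRR_apply (b : A) : eRR K A b = counitMulRight K b ⇀ 1 := by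
  have h (t : A ⊗[K] A) : TensorProduct.rid K A (LinearMap.lTensor A Coalgebra.counit
      (t * (1 ⊗ₜ[K] b))) = rightSlice (counitMulRight K b) t := by
    induction t with
    | zero => simp
    | add s t hs ht => simp only [add_mul, map_add, hs, ht]
    | tmul x y => simp [counitMulRight_apply]
  exact h _

lemma conv_algebraLinearMap_comp (f : A →ₗ[K] A) (φ : A →ₗ[K] K) (a : A) :
    conv K A f (Algebra.linearMap K A ∘ₗ φ) a = f (φ ⇀ a) := by
  have h : LinearMap.mul' K A ∘ₗ TensorProduct.map f (Algebra.linearMap K A ∘ₗ φ) =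
      f ∘ₗ rightSlice φ := by
    ext x y
    simp [← Algebra.commutes, ← Algebra.smul_def]
  exact LinearMap.congr_fun h _

lemma pairCC_tmul_one_mul_mul_one_tmul (a c : A) (t : A ⊗[K] A) :
    pairCC K A ((a ⊗ₜ[K] 1) * t * (1 ⊗ₜ[K] c)) =
      Coalgebra.counit (a * rightSlice (counitMulRight K c) t) := by
  induction t with
  | zero => simp
  | add s t hs ht => simp only [mul_add, add_mul, map_add, hs, ht]
  | tmul x y => simp [pairCC, counitMulRight_apply, mul_comm]

lemma leftMonoidal_iff : LeftMonoidal K A ↔ ∀ c a b : A,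
    counitMulRight K c (a * b) = Coalgebra.counit (a * (counitMulRight K c ⇀ b)) := by
  simp only [LeftMonoidal, pairCC_tmul_one_mul_mul_one_tmul, counitMulRight_apply, leftHit_apply]
  exact ⟨fun h c a b => h a b c, fun h a b c => h c a b⟩

end LeftMonoidal

theorem stmt1_general (hΔ : WeakBialg K A) :
    LeftMonoidal K A ↔
      ∀ a b : A, a * eRR K A b =
        conv K A LinearMap.id (epsUnit K A ∘ₗ LinearMap.mulRight K b) a := by
  have hconv (a b : A) : conv K A LinearMap.id (epsUnit K A ∘ₗ LinearMap.mulRight K b) a =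
      counitMulRight K b ⇀ a :=
    conv_algebraLinearMap_comp LinearMap.id (counitMulRight K b) a
  simp only [leftMonoidal_iff, forall_mul_eq_counit_mul_leftHit_iff hΔ, eRR_apply, hconv]
  exact forall_comm

/-- `A` is left-monoidal iff `a ε_RR(b) = ε(a₍₂₎ b) a₍₁₎` for all `a b`. -/
theorem stmt1 [FiniteDimensional K A] (hΔ : WeakBialg K A) :
    LeftMonoidal K A ↔
      ∀ a b : A, a * eRR K A b =
        conv K A LinearMap.id (epsUnit K A ∘ₗ LinearMap.mulRight K b) a := by
  exact stmt1_general K A hΔ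
end
end

section
/- Let A be a weak bialgebra and define N_LL(A) = {a ∈ A : Δ(a) = a 1₍₁₎ ⊗ 1₍₂₎}. Then a ∈ N_LL(A) if and only if ab = ε(a b₍₁₎) b₍₂₎ for all b ∈ A. -/
/-!
Under multiplicativity of `Δ`, an element `a` lies in `N_LL(A)` exactly when left multiplication by
`a` commutes with the right coaction `Δ` of `A` on itself. In any coalgebra such a colinear
endomorphism `f` is determined by the functional `ε ∘ f`: the counit law gives
`f(c) = ε(f(c₍₁₎)) c₍₂₎`, and coassociativity makes every map `c ↦ φ(c₍₁₎) c₍₂₎` colinear.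
-/

open TensorProduct

noncomputable section

variable (K A : Type*) [Field K] [Ring A] [Algebra K A] [Coalgebra K A]

section RightColinear

open Coalgebra

variable {R C : Type*} [CommSemiring R] [AddCommMonoid C] [Module R C] [Coalgebra R C]

/-- The right action `c ↦ φ(c₍₁₎) c₍₂₎` of a functional `φ` on a coalgebra, often written
`c ↼ φ`. -/
def coregularAction (φ : C →ₗ[R] R) : C →ₗ[R] C :=
  (TensorProduct.lid R C).toLinearMap ∘ₗ φ.rTensor C ∘ₗ comul

/-- The endomorphisms of a coalgebra regarded as a right comodule over itself via `Δ`, that is,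
`Δ(f(c)) = f(c₍₁₎) ⊗ c₍₂₎`. -/
def IsRightColinear (f : C →ₗ[R] C) : Prop :=
  comul ∘ₗ f = f.rTensor C ∘ₗ comul

theorem IsRightColinear.coregularAction_counit_comp {f : C →ₗ[R] C} (hf : IsRightColinear f) :
    coregularAction (counit ∘ₗ f) = f := by
  rw [coregularAction, LinearMap.rTensor_comp, LinearMap.comp_assoc, ← hf]
  ext c
  simp

theorem isRightColinear_coregularAction (φ : C →ₗ[R] R) :
    IsRightColinear (coregularAction φ) := by
  -- Idea: apply `x ⊗ y ⊗ z ↦ φ(x) y ⊗ z` to both sides of coassociativity.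
  let contract : C ⊗[R] (C ⊗[R] C) →ₗ[R] C ⊗[R] C :=
    (TensorProduct.lid R (C ⊗[R] C)).toLinearMap ∘ₗ φ.rTensor (C ⊗[R] C)
  have comul_contract : comul ∘ₗ (TensorProduct.lid R C).toLinearMap ∘ₗ φ.rTensor C =
      contract ∘ₗ comul.lTensor C := by
    ext x y
    simp [contract]
  have contract_assoc : contract ∘ₗ (TensorProduct.assoc R C C C).toLinearMap =
      ((TensorProduct.lid R C).toLinearMap ∘ₗ φ.rTensor C).rTensor C := by
    ext x y z
    simp [contract, TensorProduct.smul_tmul']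
  calc comul ∘ₗ coregularAction φ
      = (contract ∘ₗ comul.lTensor C) ∘ₗ comul := by
        rw [← comul_contract]; rfl
    _ = (contract ∘ₗ (TensorProduct.assoc R C C C).toLinearMap) ∘ₗ comul.rTensor C ∘ₗ comul := by
        rw [LinearMap.comp_assoc _ _ contract, LinearMap.comp_assoc _ _ contract, coassoc]
    _ = (coregularAction φ).rTensor C ∘ₗ comul := by
        rw [contract_assoc, ← LinearMap.comp_assoc, ← LinearMap.rTensor_comp]; rfl

theorem isRightColinear_iff_eq_coregularAction {f : C →ₗ[R] C} :
    IsRightColinear f ↔ f = coregularAction (counit ∘ₗ f) :=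
  ⟨fun hf => hf.coregularAction_counit_comp.symm,
    fun hf => hf ▸ isRightColinear_coregularAction _⟩

end RightColinear

section LeftMultiplication

open Coalgebra WithConv

variable {R B : Type*} [CommSemiring R] [Semiring B] [Algebra R B]

theorem tmul_one_mul {B' : Type*} [Semiring B'] [Algebra R B'] (a : B) (t : B ⊗[R] B') :
    (a ⊗ₜ[R] (1 : B')) * t = (LinearMap.mulLeft R a).rTensor B' t := by
  rw [← LinearMap.mulLeft_apply (R := R), LinearMap.mulLeft_tmul, LinearMap.mulLeft_one,
    LinearMap.rTensor]

variable [Coalgebra R B]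

theorem isRightColinear_mulLeft_iff
    (hΔ : ∀ x y : B, comul (R := R) (x * y) = comul (R := R) x * comul (R := R) y) {a : B} :
    IsRightColinear (LinearMap.mulLeft R a) ↔
      comul (R := R) a = (a ⊗ₜ[R] (1 : B)) * comul (R := R) (1 : B) := by
  constructor
  · intro ha
    simpa [tmul_one_mul] using LinearMap.congr_fun ha 1
  · intro ha
    ext b
    calc comul (R := R) (a * b)
        = (a ⊗ₜ[R] (1 : B)) * (comul (R := R) (1 : B) * comul (R := R) b) := by
          rw [hΔ, ha, mul_assoc]
      _ = (LinearMap.mulLeft R a).rTensor B (comul (R := R) b) := by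
          rw [← hΔ, one_mul, tmul_one_mul]

theorem algebraLinearMap_comp_convMul_id (φ : B →ₗ[R] R) :
    toConv (Algebra.linearMap R B ∘ₗ φ) * toConv LinearMap.id = toConv (coregularAction φ) := by
  have mul_map : LinearMap.mul' R B ∘ₗ TensorProduct.map (Algebra.linearMap R B ∘ₗ φ) LinearMap.id =
      (TensorProduct.lid R B).toLinearMap ∘ₗ φ.rTensor B := by
    ext x y
    simp [Algebra.smul_def]
  rw [LinearMap.convMul_def, coregularAction, ← LinearMap.comp_assoc, ← LinearMap.comp_assoc]
  exact congrArg (fun g => toConv (g ∘ₗ comul)) mul_map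

theorem stmt7_general
    (hΔ : ∀ x y : B, comul (R := R) (x * y) = comul (R := R) x * comul (R := R) y) (a : B) :
    comul (R := R) a = (a ⊗ₜ[R] (1 : B)) * comul (R := R) (1 : B) ↔
      ∀ b : B, a * b =
        (toConv (Algebra.linearMap R B ∘ₗ counit ∘ₗ LinearMap.mulLeft R a) *
          toConv LinearMap.id : WithConv (B →ₗ[R] B)) b := by
  rw [← isRightColinear_mulLeft_iff hΔ, isRightColinear_iff_eq_coregularAction,
    algebraLinearMap_comp_convMul_id, LinearMap.ext_iff]
  rfl

end LeftMultiplication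

/-- `a ∈ N_LL(A)` iff `ab = ε(a b₍₁₎) b₍₂₎` for all `b`. -/
theorem stmt7 [FiniteDimensional K A] (hΔ : WeakBialg K A) (a : A) :
    a ∈ NLL K A ↔
      ∀ b : A, a * b =
        conv K A (epsUnit K A ∘ₗ LinearMap.mulLeft K a) LinearMap.id b :=
  stmt7_general hΔ a
end
end

section
/- In a weak bialgebra A, each set N_LL(A) = {a : Δ(a) = a 1₍₁₎ ⊗ 1₍₂₎}, N_LR(A) = {a : Δ(a) = 1₍₁₎ a ⊗ 1₍₂₎}, N_RL(A) = {a : Δ(a) = 1₍₁₎ ⊗ a 1₍₂₎}, N_RR(A) = {a : Δ(a) = 1₍₁₎ ⊗ 1₍₂₎ a} is a unital subalgebra of A, and moreover N_LL(A) commutes element-wise with N_RL(A), and N_LR(A) commutes with N_RR(A). -/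
open TensorProduct

noncomputable section

variable (K A : Type*) [Field K] [Ring A] [Algebra K A] [Coalgebra K A]

/-!
Each of the four conditions says that `Δ(a)` is the product of `Δ(1)` with the image `ι(a)` of `a`
under one of the two inclusions `ι` of `A` into `A ⊗ A`. Multiplicativity of `Δ` lets every `Δ(b)`
absorb `Δ(1)` on either side, so `Δ(a) = ι(a) Δ(1)` improves to `Δ(a b) = ι(a) Δ(b)` for all `b`,
and symmetrically on the right; hence the solutions are closed under multiplication. Commutation is
checked after applying `Δ`, which is injective, and there it holds because the images of the two
inclusions commute.
-/

section MulHom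

variable {F M N : Type*} [MulOneClass M] [Semigroup N] [FunLike F M N] [MulHomClass F M N]
  {f : F} {x y : M} {c d : N}

theorem map_mul_of_map_eq_mul_map_one (hx : f x = c * f 1) (y : M) : f (x * y) = c * f y := by
  rw [map_mul, hx, mul_assoc, ← map_mul, one_mul]

theorem map_mul_of_map_eq_map_one_mul (x : M) (hy : f y = f 1 * d) : f (x * y) = f x * d := by
  rw [map_mul, hy, ← mul_assoc, ← map_mul, mul_one]

theorem commute_of_map_eq_mul_map_one (hf : Function.Injective f) (hx : f x = c * f 1)
    (hy : f y = d * f 1) (hcd : Commute c d) : Commute x y :=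
  hf <| calc
    f (x * y) = c * (d * f 1) := by rw [map_mul_of_map_eq_mul_map_one hx, hy]
    _ = d * (c * f 1) := by rw [← mul_assoc, hcd.eq, mul_assoc]
    _ = f (y * x) := by rw [map_mul_of_map_eq_mul_map_one hy, hx]

theorem commute_of_map_eq_map_one_mul (hf : Function.Injective f) (hx : f x = f 1 * c)
    (hy : f y = f 1 * d) (hcd : Commute c d) : Commute x y :=
  hf <| calc
    f (x * y) = f 1 * c * d := by rw [map_mul_of_map_eq_map_one_mul x hy, hx]
    _ = f 1 * d * c := by rw [mul_assoc, hcd.eq, mul_assoc]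
    _ = f (y * x) := by rw [map_mul_of_map_eq_map_one_mul y hx, hy]

end MulHom

section FactorSubalgebra

variable {R B C : Type*} [CommSemiring R] [Semiring B] [Algebra R B] [Semiring C] [Algebra R C]

/-- The elements `b` at which a non-unital homomorphism `f` factors as `f b = ι b * f 1`.
With `f = Δ` and `ι` the left or right inclusion of `A` into `A ⊗ A`, this is `N_LL` or `N_RL`. -/
def leftFactorSubalgebra (f : B →ₙₐ[R] C) (ι : B →ₐ[R] C) : Subalgebra R B where
  carrier := {b | f b = ι b * f 1}
  mul_mem' {x y} (hx : f x = ι x * f 1) (hy : f y = ι y * f 1) := by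
    rw [Set.mem_ofPred_eq, map_mul_of_map_eq_mul_map_one hx, hy, map_mul, mul_assoc]
  add_mem' {x y} (hx : f x = ι x * f 1) (hy : f y = ι y * f 1) := by
    rw [Set.mem_ofPred_eq, map_add, map_add, hx, hy, add_mul]
  algebraMap_mem' r := by
    rw [Set.mem_ofPred_eq, Algebra.algebraMap_eq_smul_one, map_smul, map_smul, map_one ι,
      smul_one_mul]

/-- The elements `b` at which a non-unital homomorphism `f` factors as `f b = f 1 * ι b`.
With `f = Δ` and `ι` the left or right inclusion of `A` into `A ⊗ A`, this is `N_LR` or `N_RR`. -/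
def rightFactorSubalgebra (f : B →ₙₐ[R] C) (ι : B →ₐ[R] C) : Subalgebra R B where
  carrier := {b | f b = f 1 * ι b}
  mul_mem' {x y} (hx : f x = f 1 * ι x) (hy : f y = f 1 * ι y) := by
    rw [Set.mem_ofPred_eq, map_mul_of_map_eq_map_one_mul x hy, hx, map_mul, mul_assoc]
  add_mem' {x y} (hx : f x = f 1 * ι x) (hy : f y = f 1 * ι y) := by
    rw [Set.mem_ofPred_eq, map_add, map_add, hx, hy, mul_add]
  algebraMap_mem' r := by
    rw [Set.mem_ofPred_eq, Algebra.algebraMap_eq_smul_one, map_smul, map_smul, map_one ι,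
      mul_smul_one]

end FactorSubalgebra

theorem comul_injective (R C : Type*) [CommSemiring R] [AddCommMonoid C] [Module R C]
    [Coalgebra R C] : Function.Injective (Coalgebra.comul (R := R) (A := C)) :=
  Function.LeftInverse.injective
    (g := TensorProduct.lid R C ∘ LinearMap.rTensor C Coalgebra.counit) fun c ↦ by
      rw [Function.comp_apply, Coalgebra.rTensor_counit_comul, TensorProduct.lid_tmul, one_smul]

theorem commute_tmul_one_one_tmul {R B C : Type*} [CommSemiring R] [Semiring B]
    [Algebra R B] [Semiring C] [Algebra R C] (b : B) (c : C) :
    Commute (b ⊗ₜ[R] (1 : C)) ((1 : B) ⊗ₜ[R] c) :=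
  (Commute.one_right b).tmul (Commute.one_left c)

theorem isUnitalSub_coe {F B : Type*} [Field F] [Ring B] [Algebra F B] (S : Subalgebra F B) :
    IsUnitalSub F B S :=
  ⟨S.one_mem, fun _ hx _ hy ↦ S.mul_mem hx hy, fun _ hx _ hy ↦ S.add_mem hx hy,
    fun k _ hx ↦ S.smul_mem hx k⟩

variable {K A} in
/-- The coproduct of a weak bialgebra as an algebra homomorphism; it is bundled as a non-unital one
because `Δ(1)` need not be `1 ⊗ 1`. -/
def WeakBialg.comulHom (hΔ : WeakBialg K A) : A →ₙₐ[K] A ⊗[K] A where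
  toFun := Coalgebra.comul (R := K)
  map_smul' := map_smul _
  map_zero' := map_zero _
  map_add' := map_add _
  map_mul' := hΔ

open Algebra.TensorProduct in
theorem stmt8_general (hΔ : WeakBialg K A) :
    IsUnitalSub K A (NLL K A) ∧ IsUnitalSub K A (NLR K A) ∧
    IsUnitalSub K A (NRL K A) ∧ IsUnitalSub K A (NRR K A) ∧
    (∀ x ∈ NLL K A, ∀ y ∈ NRL K A, x * y = y * x) ∧
    (∀ x ∈ NLR K A, ∀ y ∈ NRR K A, x * y = y * x) := by
  have comulHom_injective : Function.Injective hΔ.comulHom := comul_injective K A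
  refine ⟨isUnitalSub_coe (leftFactorSubalgebra hΔ.comulHom includeLeft),
    isUnitalSub_coe (rightFactorSubalgebra hΔ.comulHom includeLeft),
    isUnitalSub_coe (leftFactorSubalgebra hΔ.comulHom includeRight),
    isUnitalSub_coe (rightFactorSubalgebra hΔ.comulHom includeRight), ?_, ?_⟩
  · exact fun x hx y hy ↦ commute_of_map_eq_mul_map_one comulHom_injective hx hy
      (commute_tmul_one_one_tmul x y)
  · exact fun x hx y hy ↦ commute_of_map_eq_map_one_mul comulHom_injective hx hy
      (commute_tmul_one_one_tmul x y)

/-- the sets `N_LL, N_LR, N_RL, N_RR` are unital subalgebras,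
`N_LL` commutes with `N_RL` and `N_LR` commutes with `N_RR`. -/
theorem stmt8 [FiniteDimensional K A] (hΔ : WeakBialg K A) :
    IsUnitalSub K A (NLL K A) ∧ IsUnitalSub K A (NLR K A) ∧
    IsUnitalSub K A (NRL K A) ∧ IsUnitalSub K A (NRR K A) ∧
    (∀ x ∈ NLL K A, ∀ y ∈ NRL K A, x * y = y * x) ∧
    (∀ x ∈ NLR K A, ∀ y ∈ NRR K A, x * y = y * x) :=
  stmt8_general K A hΔ
end
end

section
/- A weak bialgebra A is left-comonoidal, i.e. (Δ(1) ⊗ 1)(1 ⊗ Δ(1)) = (Δ ⊗ id)(Δ(1)), if and only if A_L := {φ(1₍₁₎) 1₍₂₎ : φ ∈ Â} equals N_LL(A) = {a : Δ(a) = a 1₍₁₎ ⊗ 1₍₂₎}. -/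
open TensorProduct

noncomputable section

variable (K A : Type*) [Field K] [Ring A] [Algebra K A] [Coalgebra K A]

/-!
An element of `M ⊗ N` with `M` projective is determined by its slices `(φ ⊗ id) t`, where `φ` ranges
over the functionals on `M`. By coassociativity, left comonoidality reads
`(Δ(1) ⊗ 1)(1 ⊗ Δ(1)) = (id ⊗ Δ)(Δ(1))`. Slicing its first leg by `φ` turns it into
`(x ⊗ 1) Δ(1) = Δ(x)` for `x = φ(1₍₁₎) 1₍₂₎`, so left comonoidality says exactly that
`A_L ⊆ N_LL(A)`. Conversely, applying `ε ⊗ id` to `Δ(a) = a 1₍₁₎ ⊗ 1₍₂₎` gives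
`a = ε(a 1₍₁₎) 1₍₂₎`, so the inclusion `N_LL(A) ⊆ A_L` always holds.
-/

section Slice

variable {R M N P : Type*} [CommSemiring R] [AddCommMonoid M] [Module R M]
  [AddCommMonoid N] [Module R N] [AddCommMonoid P] [Module R P]

/-- The slice map `m ⊗ n ↦ φ(m) n` of a functional `φ`: it evaluates the first tensor leg, so that
`A_L` is the set of slices of `Δ(1)`. -/
def sliceLeft (φ : M →ₗ[R] R) : M ⊗[R] N →ₗ[R] N :=
  (TensorProduct.lid R N).toLinearMap ∘ₗ LinearMap.rTensor N φ

@[simp]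
theorem sliceLeft_tmul (φ : M →ₗ[R] R) (m : M) (n : N) : sliceLeft φ (m ⊗ₜ[R] n) = φ m • n :=
  rfl

theorem sliceLeft_comp_rTensor (φ : N →ₗ[R] R) (f : M →ₗ[R] N) :
    sliceLeft φ ∘ₗ LinearMap.rTensor P f = sliceLeft (φ ∘ₗ f) :=
  TensorProduct.ext' fun _ _ ↦ rfl

theorem sliceLeft_lTensor (φ : M →ₗ[R] R) (f : N →ₗ[R] P) (t : M ⊗[R] N) :
    sliceLeft φ (LinearMap.lTensor M f t) = f (sliceLeft φ t) := by
  induction t with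
  | zero => simp only [map_zero]
  | tmul m n => simp
  | add s t hs ht => simp only [map_add, hs, ht]

theorem sliceLeft_assoc_tmul (φ : M →ₗ[R] R) (t : M ⊗[R] N) (p : P) :
    sliceLeft φ (TensorProduct.assoc R M N P (t ⊗ₜ[R] p)) = sliceLeft φ t ⊗ₜ[R] p := by
  induction t with
  | zero => simp only [TensorProduct.zero_tmul, map_zero]
  | tmul m n => simp [TensorProduct.smul_tmul']
  | add s t hs ht => simp only [TensorProduct.add_tmul, map_add, hs, ht]

theorem eq_of_forall_sliceLeft_eq [Module.Projective R M] {s t : M ⊗[R] N}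
    (h : ∀ φ : M →ₗ[R] R, sliceLeft φ s = sliceLeft φ t) : s = t := by
  classical
  obtain ⟨f, hf⟩ := Module.projective_def'.mp ‹Module.Projective R M›
  have rTensor_injective : Function.Injective (LinearMap.rTensor N f) :=
    Function.LeftInverse.injective
      (g := LinearMap.rTensor N (Finsupp.linearCombination R id)) fun u ↦ by
        rw [← LinearMap.rTensor_comp_apply, hf, LinearMap.rTensor_id_apply]
  have coord_eq (u : M ⊗[R] N) (i : M) :
      TensorProduct.finsuppScalarLeft R N M (LinearMap.rTensor N f u) i =
        sliceLeft (Finsupp.lapply i ∘ₗ f) u := by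
    rw [TensorProduct.finsuppScalarLeft_apply, ← sliceLeft_comp_rTensor]
    rfl
  apply rTensor_injective
  apply (TensorProduct.finsuppScalarLeft R N M).injective
  ext i
  rw [coord_eq, coord_eq, h]

end Slice

section SliceMul

variable {R A B : Type*} [CommSemiring R] [Semiring A] [Algebra R A] [Semiring B] [Algebra R B]

theorem sliceLeft_mul_one_tmul (φ : A →ₗ[R] R) (t : A ⊗[R] B) (b : B) :
    sliceLeft φ (t * ((1 : A) ⊗ₜ[R] b)) = sliceLeft φ t * b := by
  induction t with
  | zero => simp only [zero_mul, map_zero]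
  | tmul x y => simp
  | add s t hs ht => simp only [add_mul, map_add, hs, ht]

theorem sliceLeft_tmul_one_mul (φ : A →ₗ[R] R) (a : A) (t : A ⊗[R] B) :
    sliceLeft φ ((a ⊗ₜ[R] (1 : B)) * t) = sliceLeft (φ ∘ₗ LinearMap.mulLeft R a) t := by
  induction t with
  | zero => simp only [mul_zero, map_zero]
  | tmul x y => simp
  | add s t hs ht => simp only [mul_add, map_add, hs, ht]

end SliceMul

theorem sliceLeft_counit_comul {R C : Type*} [CommSemiring R] [AddCommMonoid C] [Module R C]
    [Coalgebra R C] (c : C) :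
    sliceLeft Coalgebra.counit (Coalgebra.comul (R := R) c) = c := by
  simp [sliceLeft]

theorem ALset_eq_range_sliceLeft :
    ALset K A =
      Set.range fun φ : A →ₗ[K] K ↦ sliceLeft φ (Coalgebra.comul (R := K) (1 : A)) :=
  Set.ext fun _ ↦ exists_congr fun _ ↦ eq_comm

theorem NLL_subset_ALset : NLL K A ⊆ ALset K A := by
  intro a (ha : Coalgebra.comul a = (a ⊗ₜ[K] (1 : A)) * Coalgebra.comul 1)
  rw [ALset_eq_range_sliceLeft]
  refine ⟨Coalgebra.counit ∘ₗ LinearMap.mulLeft K a, ?_⟩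
  dsimp only
  rw [← sliceLeft_tmul_one_mul, ← ha, sliceLeft_counit_comul]

theorem leftComonoidal_iff_assoc_mul_eq_lTensor_comul :
    LeftComonoidal K A ↔
      TensorProduct.assoc K A A A (Coalgebra.comul (R := K) (1 : A) ⊗ₜ[K] (1 : A)) *
          ((1 : A) ⊗ₜ[K] Coalgebra.comul (R := K) (1 : A)) =
        LinearMap.lTensor A (Coalgebra.comul (R := K)) (Coalgebra.comul (R := K) (1 : A)) := by
  have assoc_mul (s t : (A ⊗[K] A) ⊗[K] A) : TensorProduct.assoc K A A A (s * t) =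
      TensorProduct.assoc K A A A s * TensorProduct.assoc K A A A t :=
    map_mul (Algebra.TensorProduct.assoc K K K A A A) s t
  rw [LeftComonoidal, ← (TensorProduct.assoc K A A A).injective.eq_iff, Coalgebra.coassoc_apply,
    assoc_mul, LinearEquiv.apply_symm_apply]

theorem leftComonoidal_iff_ALset_subset_NLL : LeftComonoidal K A ↔ ALset K A ⊆ NLL K A := by
  rw [leftComonoidal_iff_assoc_mul_eq_lTensor_comul, ALset_eq_range_sliceLeft,
    Set.range_subset_iff]
  have slice_iff (φ : A →ₗ[K] K) :
      sliceLeft φ (Coalgebra.comul (R := K) (1 : A)) ∈ NLL K A ↔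
        sliceLeft φ (TensorProduct.assoc K A A A (Coalgebra.comul (R := K) (1 : A) ⊗ₜ[K] (1 : A)) *
            ((1 : A) ⊗ₜ[K] Coalgebra.comul (R := K) (1 : A))) =
          sliceLeft φ (LinearMap.lTensor A (Coalgebra.comul (R := K))
            (Coalgebra.comul (R := K) (1 : A))) := by
    rw [sliceLeft_mul_one_tmul, sliceLeft_assoc_tmul, sliceLeft_lTensor]
    exact eq_comm
  simp only [slice_iff]
  exact ⟨fun h φ ↦ congrArg (sliceLeft φ) h, eq_of_forall_sliceLeft_eq⟩

theorem stmt10_general : LeftComonoidal K A ↔ ALset K A = NLL K A := by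
  rw [leftComonoidal_iff_ALset_subset_NLL, Set.Subset.antisymm_iff]
  exact (and_iff_left (NLL_subset_ALset K A)).symm

/-- `A` is left-comonoidal iff `A_L = N_LL(A)`. -/
theorem stmt10 [FiniteDimensional K A] (hΔ : WeakBialg K A) :
    LeftComonoidal K A ↔ ALset K A = NLL K A :=
  stmt10_general K A
end
end

section
/- Let A be a weak bialgebra with a Hopf antipode S, i.e. a linear map satisfying S(a₍₁₎) a₍₂₎ = a₍₁₎ S(a₍₂₎) = ε(a) 1 for all a. Then ε_LR(a) = ε_RL(a) = ε(a) 1 for all a ∈ A. -/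
open TensorProduct

noncomputable section

variable (K A : Type*) [Field K] [Ring A] [Algebra K A] [Coalgebra K A]

/-!
A Hopf antipode is a two-sided inverse of `id` for the convolution product, whose unit is
`a ↦ ε(a) 1`. Applying `ε ⊗ id` to `Δ(1) Δ(a) = Δ(a)` gives `ε_LR(a₍₁₎) a₍₂₎ = a`, that is,
`ε_LR * id = id`; cancelling `id` on the right leaves `ε_LR = ε(·) 1`. Symmetrically,
`Δ(a) Δ(1) = Δ(a)` gives `id * ε_RL = id`, and one cancels `id` on the left.
-/

section Slice

variable {R B C : Type*} [CommSemiring R] [Semiring B] [Algebra R B] [Semiring C] [Algebra R C]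

theorem lid_rTensor_mul_one_tmul (φ : B →ₗ[R] R) (u : B ⊗[R] C) (c : C) :
    TensorProduct.lid R C (LinearMap.rTensor C φ (u * 1 ⊗ₜ[R] c)) =
      TensorProduct.lid R C (LinearMap.rTensor C φ u) * c := by
  induction u with
  | zero => simp
  | add u v hu hv => simp only [add_mul, map_add, hu, hv]
  | tmul x y => simp

theorem rid_lTensor_tmul_one_mul (φ : C →ₗ[R] R) (b : B) (u : B ⊗[R] C) :
    TensorProduct.rid R B (LinearMap.lTensor B φ (b ⊗ₜ[R] 1 * u)) =
      b * TensorProduct.rid R B (LinearMap.lTensor B φ u) := by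
  induction u with
  | zero => simp
  | add u v hu hv => simp only [mul_add, map_add, hu, hv]
  | tmul x y => simp

end Slice

section Convolution

variable {K A}

theorem conv_assoc (f g h : A →ₗ[K] A) :
    conv K A (conv K A f g) h = conv K A f (conv K A g h) :=
  congrArg WithConv.ofConv
    (mul_assoc (WithConv.toConv f) (WithConv.toConv g) (WithConv.toConv h))

theorem conv_epsUnit (f : A →ₗ[K] A) : conv K A f (epsUnit K A) = f :=
  congrArg WithConv.ofConv (mul_one (WithConv.toConv f))

theorem epsUnit_conv (f : A →ₗ[K] A) : conv K A (epsUnit K A) f = f :=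
  congrArg WithConv.ofConv (one_mul (WithConv.toConv f))

end Convolution

section WeakBialgebra

variable {K A}

theorem mul'_map_eLR_id (t : A ⊗[K] A) :
    LinearMap.mul' K A (TensorProduct.map (eLR K A) LinearMap.id t) =
      TensorProduct.lid K A (LinearMap.rTensor A (Coalgebra.counit (R := K))
        (Coalgebra.comul (R := K) (1 : A) * t)) := by
  induction t with
  | zero => simp
  | add s t hs ht => simp only [map_add, mul_add, hs, ht]
  | tmul x y =>
    have hxy : x ⊗ₜ[K] y = (x ⊗ₜ[K] 1) * (1 ⊗ₜ[K] y) := by simp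
    rw [hxy, ← mul_assoc, lid_rTensor_mul_one_tmul, ← hxy]
    rfl

theorem mul'_map_id_eRL (t : A ⊗[K] A) :
    LinearMap.mul' K A (TensorProduct.map LinearMap.id (eRL K A) t) =
      TensorProduct.rid K A (LinearMap.lTensor A (Coalgebra.counit (R := K))
        (t * Coalgebra.comul (R := K) (1 : A))) := by
  induction t with
  | zero => simp
  | add s t hs ht => simp only [map_add, add_mul, hs, ht]
  | tmul x y =>
    have hxy : x ⊗ₜ[K] y = (x ⊗ₜ[K] 1) * (1 ⊗ₜ[K] y) := by simp
    rw [hxy, mul_assoc, rid_lTensor_tmul_one_mul, ← hxy]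
    rfl

theorem WeakBialg.conv_eLR_id (hΔ : WeakBialg K A) :
    conv K A (eLR K A) LinearMap.id = LinearMap.id := by
  ext a
  calc conv K A (eLR K A) LinearMap.id a
      = TensorProduct.lid K A (LinearMap.rTensor A (Coalgebra.counit (R := K))
          (Coalgebra.comul (R := K) 1 * Coalgebra.comul (R := K) a)) :=
        mul'_map_eLR_id (Coalgebra.comul a)
    _ = a := by
        rw [← hΔ, one_mul, Coalgebra.rTensor_counit_comul, TensorProduct.lid_tmul, one_smul]

theorem WeakBialg.conv_id_eRL (hΔ : WeakBialg K A) :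
    conv K A LinearMap.id (eRL K A) = LinearMap.id := by
  ext a
  calc conv K A LinearMap.id (eRL K A) a
      = TensorProduct.rid K A (LinearMap.lTensor A (Coalgebra.counit (R := K))
          (Coalgebra.comul (R := K) a * Coalgebra.comul (R := K) 1)) :=
        mul'_map_id_eRL (Coalgebra.comul a)
    _ = a := by
        rw [← hΔ, mul_one, Coalgebra.lTensor_counit_comul, TensorProduct.rid_tmul, one_smul]

theorem WeakBialg.eLR_eq_epsUnit (hΔ : WeakBialg K A) {S : A →ₗ[K] A}
    (hS : conv K A LinearMap.id S = epsUnit K A) : eLR K A = epsUnit K A :=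
  calc eLR K A
      = conv K A (eLR K A) (conv K A LinearMap.id S) := by rw [hS, conv_epsUnit]
    _ = conv K A LinearMap.id S := by rw [← conv_assoc, hΔ.conv_eLR_id]
    _ = epsUnit K A := hS

theorem WeakBialg.eRL_eq_epsUnit (hΔ : WeakBialg K A) {S : A →ₗ[K] A}
    (hS : conv K A S LinearMap.id = epsUnit K A) : eRL K A = epsUnit K A :=
  calc eRL K A
      = conv K A (conv K A S LinearMap.id) (eRL K A) := by rw [hS, epsUnit_conv]
    _ = conv K A S LinearMap.id := by rw [conv_assoc, hΔ.conv_id_eRL]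
    _ = epsUnit K A := hS

end WeakBialgebra

theorem stmt12_general (hΔ : WeakBialg K A) (S : A →ₗ[K] A)
    (h1 : ∀ a : A, conv K A S LinearMap.id a = epsUnit K A a)
    (h2 : ∀ a : A, conv K A LinearMap.id S a = epsUnit K A a) :
    ∀ a : A, eLR K A a = epsUnit K A a ∧ eRL K A a = epsUnit K A a := fun a =>
  ⟨LinearMap.congr_fun (hΔ.eLR_eq_epsUnit (LinearMap.ext h2)) a,
    LinearMap.congr_fun (hΔ.eRL_eq_epsUnit (LinearMap.ext h1)) a⟩

/-- if `S` is a Hopf antipode, then `ε_LR(a) = ε_RL(a) = ε(a) 1`. -/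
theorem stmt12 [FiniteDimensional K A] (hΔ : WeakBialg K A) (S : A →ₗ[K] A)
    (h1 : ∀ a : A, conv K A S LinearMap.id a = epsUnit K A a)
    (h2 : ∀ a : A, conv K A LinearMap.id S a = epsUnit K A a) :
    ∀ a : A, eLR K A a = epsUnit K A a ∧ eRL K A a = epsUnit K A a :=
  stmt12_general K A hΔ S h1 h2
end
end

section
/- If S is a pre-antipode on a weak bialgebra A and S is anti-multiplicative (S(ab) = S(b)S(a)), then S(1) = 1. -/
open TensorProduct

noncomputable section

variable (K A : Type*) [Field K] [Ring A] [Algebra K A] [Coalgebra K A]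

theorem mulRight_comp_mul'_comp_map {R M N B : Type*} [CommSemiring R]
    [AddCommMonoid M] [Module R M] [AddCommMonoid N] [Module R N] [Semiring B] [Algebra R B]
    (f : M →ₗ[R] B) (g : N →ₗ[R] B) (b : B) :
    LinearMap.mulRight R b ∘ₗ LinearMap.mul' R B ∘ₗ TensorProduct.map f g =
      LinearMap.mul' R B ∘ₗ TensorProduct.map f (LinearMap.mulRight R b ∘ₗ g) :=
  TensorProduct.ext' fun x y => mul_assoc (f x) (g y) b

section

variable {K A}

theorem conv_apply_mul (f g : A →ₗ[K] A) (a b : A) :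
    conv K A f g a * b = conv K A f (LinearMap.mulRight K b ∘ₗ g) a :=
  LinearMap.congr_fun (mulRight_comp_mul'_comp_map f g b) (Coalgebra.comul a)

theorem eLR_one : eLR K A 1 = 1 := by
  have inclL_one : inclL K A 1 = 1 := rfl
  simp only [eLR, LinearMap.comp_apply, inclL_one, LinearMap.mulLeft_apply, mul_one,
    Coalgebra.rTensor_counit_comul, LinearEquiv.coe_coe, TensorProduct.lid_tmul, one_smul]

end

theorem stmt15_general (S : A →ₗ[K] A) (hpre : conv K A LinearMap.id S = eLR K A)
    (hanti : ∀ a b : A, S (a * b) = S b * S a) :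
    S 1 = 1 := by
  have mulRight_S_one : LinearMap.mulRight K (S 1) ∘ₗ S = S :=
    LinearMap.ext fun a => by
      rw [LinearMap.comp_apply, LinearMap.mulRight_apply, ← hanti, one_mul]
  have conv_one : conv K A LinearMap.id S 1 = 1 := by rw [hpre, eLR_one]
  calc
    S 1 = conv K A LinearMap.id S 1 * S 1 := by rw [conv_one, one_mul]
    _ = conv K A LinearMap.id (LinearMap.mulRight K (S 1) ∘ₗ S) 1 := conv_apply_mul _ _ _ _
    _ = 1 := by rw [mulRight_S_one, conv_one]

/-- an anti-multiplicative pre-antipode satisfies `S(1) = 1`. -/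
theorem stmt15 [FiniteDimensional K A] (hΔ : WeakBialg K A) (S : A →ₗ[K] A)
    (hpre1 : conv K A LinearMap.id S = eLR K A)
    (hpre2 : conv K A S LinearMap.id = eRL K A)
    (hanti : ∀ a b : A, S (a * b) = S b * S a) :
    S 1 = 1 :=
  stmt15_general K A S hpre1 hanti
end
end
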